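/- Let R be a commutative ring, ψ : R → S a centralizing G-Galois extension and ψ' : R → S' a centralizing G'-Galois extension (G, G' finite groups). Equip S ⊗_R S' with the multiplication (s ⊗ s')(t ⊗ t') = st ⊗ s't' and with the action of G × G' given by (g,g')·(s ⊗ s') = g(s) ⊗ g'(s'). Then the canonical extension ψ'' : R → S ⊗_R S', r ↦ ψ(r) ⊗ 1, is a centralizing (G × G')-Galois extension. If moreover ψ and ψ' are central (i.e. G-Galois-Azumaya and G'-Galois-Azumaya), then ψ'' is a central (G × G')-Galois extension, i.e. a (G × G')-Galois-Azumaya extension. -/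

import Mathlib

open scoped TensorProduct

namespace Nuss
noncomputable section

variable {R : Type*} [CommRing R] {S : Type*} [Ring S] [Algebra R S]
variable {G : Type*} [Group G]

/-- The Galois map `Γ : S ⊗[R] S →ₗ[R] Map(G,S)`, `Γ(s ⊗ t)(g) = s⬝g(t)`, for a centralizing
extension, i.e. an `R`-algebra `S`, with `G` acting by `R`-algebra automorphisms. -/
def gammaAlg (act : G →* (S ≃ₐ[R] S)) : S ⊗[R] S →ₗ[R] (G → S) :=
  TensorProduct.lift <| LinearMap.mk₂ R (fun s t => fun g => s * act g t)
    (fun s s' t => by funext g; simp [add_mul])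
    (fun c s t => by funext g; simp [Algebra.smul_mul_assoc])
    (fun s t t' => by funext g; simp [map_add, mul_add])
    (fun c s t => by funext g; simp [map_smul, Algebra.mul_smul_comm])

@[simp] lemma gammaAlg_tmul (act : G →* (S ≃ₐ[R] S)) (s t : S) :
    gammaAlg act (s ⊗ₜ[R] t) = fun g => s * act g t := rfl

/-- The function `δ_e ∈ Map(G, S)`: `1` at the neutral element, `0` elsewhere. -/
def deltaE' (G S : Type*) [Group G] [Ring S] : G → S :=
  fun g => letI := Classical.decEq G; if g = 1 then 1 else 0

/-- A centralizing `G`-Galois extension: `S` is an `R`-algebra (so that the structure morphism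
`ψ = algebraMap R S` lands in the centre of `S`), the finite group `G` acts on `S` by
`R`-algebra automorphisms (equivalently, by ring automorphisms fixing `ψ(R)` pointwise),
`S` is a faithfully flat `R`-module via `ψ`, and the Galois map is bijective. -/
structure IsCentralizingGaloisExtension (G : Type*) [Group G] [Finite G]
    (R S : Type*) [CommRing R] [Ring S] [Algebra R S] (act : G →* (S ≃ₐ[R] S)) : Prop where
  faithfullyFlat : Module.FaithfullyFlat R S
  bijective : Function.Bijective (gammaAlg act)

/-- A central extension: the structure morphism maps `R` bijectively onto the centre of `S`. -/
def IsCentralExtension (R S : Type*) [CommRing R] [Ring S] [Algebra R S] : Prop :=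
  Function.Injective (algebraMap R S) ∧ (algebraMap R S).range = Subring.center S

/-- A separable extension: the multiplication `μ : S ⊗[R] S → S` splits as a morphism of
`S`-bimodules; equivalently there is a Casimir element `η` with `μ(η) = 1`. -/
def IsSeparableExtension (R S : Type*) [CommRing R] [Ring S] [Algebra R S] : Prop :=
  ∃ η : S ⊗[R] S, (∀ s : S, (s ⊗ₜ[R] (1 : S)) * η = η * ((1 : S) ⊗ₜ[R] s)) ∧
    LinearMap.mul' R S η = 1

/-- A `G`-Galois-Azumaya extension: a central `G`-Galois extension `R → S` such that `S` is
an Azumaya (central separable) `R`-algebra. -/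
def IsGaloisAzumayaExtension (G : Type*) [Group G] [Finite G]
    (R S : Type*) [CommRing R] [Ring S] [Algebra R S] (act : G →* (S ≃ₐ[R] S)) : Prop :=
  IsCentralizingGaloisExtension G R S act ∧ IsCentralExtension R S ∧ IsSeparableExtension R S

end
end Nuss

namespace Nuss
noncomputable section

/-!
Under the identification `Map(G, S) ⊗ Map(G', S') ≃ Map(G × G', S ⊗ S')`, the Galois map of
`S ⊗ S'` is the tensor product of the Galois maps of `S` and `S'`, hence bijective.

Galois extensions are separable: the preimage of `δ_e` under the Galois map is a separability
element. A separability element `∑ xᵢ ⊗ yᵢ` of `S` yields a projection `s ↦ ∑ xᵢ s yᵢ` of `S` onto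
its centre. The projection for `S ⊗ S'` built from separability elements of `S` and `S'` is the
tensor product of theirs, so the centre of `S ⊗ S'` is the image of the tensor product of the
centres, and centrality passes to `S ⊗ S'`.
-/

section FaithfullyFlat

variable {R M N : Type*} [CommRing R] [AddCommGroup M] [AddCommGroup N] [Module R M] [Module R N]

lemma faithfullyFlat_tensorProduct [Module.FaithfullyFlat R M] [Module.FaithfullyFlat R N] :
    Module.FaithfullyFlat R (M ⊗[R] N) := by
  rw [Module.FaithfullyFlat.iff_flat_and_lTensor_faithful]
  exact ⟨inferInstance, fun P _ _ _ => (TensorProduct.assoc R M N P).toEquiv.nontrivial⟩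

end FaithfullyFlat

section PiTensorPi

variable (R : Type*) [CommSemiring R] (M N : Type*) [AddCommMonoid M] [AddCommMonoid N]
  [Module R M] [Module R N] (ι κ : Type*) [Fintype ι] [Fintype κ] [DecidableEq ι] [DecidableEq κ]

/-- The isomorphism `Map(ι, M) ⊗ Map(κ, N) ≃ Map(ι × κ, M ⊗ N)` for finite `ι` and `κ`, sending
`f ⊗ f'` to `(i, j) ↦ f i ⊗ f' j`. -/
def piTensorPi : (ι → M) ⊗[R] (κ → N) ≃ₗ[R] (ι × κ → M ⊗[R] N) :=
  TensorProduct.piLeft R (κ → N) (fun _ : ι => M) ≪≫ₗ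
    LinearEquiv.piCongrRight (fun _ => TensorProduct.piRight R R M fun _ : κ => N) ≪≫ₗ
    (LinearEquiv.curry R (M ⊗[R] N) ι κ).symm

variable {R M N ι κ}

@[simp]
lemma piTensorPi_tmul_apply (f : ι → M) (f' : κ → N) (p : ι × κ) :
    piTensorPi R M N ι κ (f ⊗ₜ[R] f') p = f p.1 ⊗ₜ[R] f' p.2 := by
  simp [piTensorPi, Function.uncurry]

end PiTensorPi

section GaloisMap

variable {R : Type*} [CommRing R] {S S' : Type*} [Ring S] [Ring S'] [Algebra R S] [Algebra R S']
  {G G' : Type*} [Group G] [Group G']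

lemma gammaAlg_tmul_one_mul (act : G →* (S ≃ₐ[R] S)) (s : S) (x : S ⊗[R] S) (g : G) :
    gammaAlg act (s ⊗ₜ[R] 1 * x) g = s * gammaAlg act x g := by
  induction x with
  | zero => simp
  | add x y hx hy => simp only [mul_add, map_add, Pi.add_apply, hx, hy]
  | tmul x y => simp [mul_assoc]

lemma gammaAlg_mul_one_tmul (act : G →* (S ≃ₐ[R] S)) (s : S) (x : S ⊗[R] S) (g : G) :
    gammaAlg act (x * 1 ⊗ₜ[R] s) g = gammaAlg act x g * act g s := by
  induction x with
  | zero => simp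
  | add x y hx hy => simp only [add_mul, map_add, Pi.add_apply, hx, hy]
  | tmul x y => simp [mul_assoc]

lemma gammaAlg_apply_one (act : G →* (S ≃ₐ[R] S)) (x : S ⊗[R] S) :
    gammaAlg act x 1 = LinearMap.mul' R S x := by
  induction x with
  | zero => simp
  | add x y hx hy => simp only [map_add, Pi.add_apply, hx, hy]
  | tmul x y => simp

lemma isSeparableExtension_of_gammaAlg_bijective {act : G →* (S ≃ₐ[R] S)}
    (h : Function.Bijective (gammaAlg act)) : IsSeparableExtension R S := by
  obtain ⟨η, hη⟩ := h.surjective (deltaE' G S)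
  refine ⟨η, fun s => h.injective ?_, ?_⟩
  · funext g
    rw [gammaAlg_tmul_one_mul, gammaAlg_mul_one_tmul, hη]
    by_cases hg : g = 1 <;> simp [deltaE', hg]
  · rw [← gammaAlg_apply_one act, hη]
    simp [deltaE']

lemma gammaAlg_tensorProduct [Fintype G] [Fintype G'] [DecidableEq G] [DecidableEq G']
    (act : G →* (S ≃ₐ[R] S)) (act' : G' →* (S' ≃ₐ[R] S'))
    (act'' : (G × G') →* ((S ⊗[R] S') ≃ₐ[R] (S ⊗[R] S')))
    (hact'' : ∀ (g : G) (g' : G') (s : S) (s' : S'),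
      act'' (g, g') (s ⊗ₜ[R] s') = (act g s) ⊗ₜ[R] (act' g' s')) :
    gammaAlg act'' = (piTensorPi R S S' G G').toLinearMap ∘ₗ
      TensorProduct.map (gammaAlg act) (gammaAlg act') ∘ₗ
        (TensorProduct.tensorTensorTensorComm R S S' S S').toLinearMap := by
  ext s s' t t' ⟨g, g'⟩
  simp [hact'']

end GaloisMap

section Sandwich

variable {R : Type*} [CommSemiring R] {S S' : Type*} [Semiring S] [Semiring S']
  [Algebra R S] [Algebra R S']

variable (R S) in
/-- The sandwich map sending `x ⊗ y` to the endomorphism `s ↦ x * s * y` of `S`. It is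
`AlgHom.mulLeftRight` with `Sᵐᵒᵖ` replaced by `S`, hence only linear. -/
def sandwich : S ⊗[R] S →ₗ[R] Module.End R S :=
  TensorProduct.lift <|
    (LinearMap.mul R (Module.End R S)).compl₁₂ (LinearMap.mul R S) (LinearMap.mul R S).flip

@[simp]
lemma sandwich_tmul_apply (x y s : S) : sandwich R S (x ⊗ₜ[R] y) s = x * s * y :=
  (mul_assoc x s y).symm

lemma sandwich_tmul_one_mul_apply (t s : S) (η : S ⊗[R] S) :
    sandwich R S (t ⊗ₜ[R] 1 * η) s = t * sandwich R S η s := by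
  induction η with
  | zero => simp
  | add x y hx hy => simp only [mul_add, map_add, LinearMap.add_apply, hx, hy]
  | tmul x y => simp [mul_assoc]

lemma sandwich_mul_one_tmul_apply (t s : S) (η : S ⊗[R] S) :
    sandwich R S (η * 1 ⊗ₜ[R] t) s = sandwich R S η s * t := by
  induction η with
  | zero => simp
  | add x y hx hy => simp only [add_mul, map_add, LinearMap.add_apply, hx, hy]
  | tmul x y => simp [mul_assoc]

lemma sandwich_apply_mem_center {η : S ⊗[R] S}
    (hη : ∀ s : S, s ⊗ₜ[R] (1 : S) * η = η * (1 : S) ⊗ₜ[R] s) (s : S) :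
    sandwich R S η s ∈ Subalgebra.center R S := by
  rw [Subalgebra.mem_center_iff]
  intro t
  rw [← sandwich_tmul_one_mul_apply, hη, sandwich_mul_one_tmul_apply]

lemma sandwich_apply_of_mem_center {z : S} (hz : z ∈ Subalgebra.center R S) (η : S ⊗[R] S) :
    sandwich R S η z = z * LinearMap.mul' R S η := by
  induction η with
  | zero => simp
  | add x y hx hy => simp only [mul_add, map_add, LinearMap.add_apply, hx, hy]
  | tmul x y =>
    rw [sandwich_tmul_apply, Subalgebra.mem_center_iff.1 hz x, LinearMap.mul'_apply, mul_assoc]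

lemma sandwich_tensorTensorTensorComm (η : S ⊗[R] S) (η' : S' ⊗[R] S') :
    sandwich R (S ⊗[R] S') (TensorProduct.tensorTensorTensorComm R S S S' S' (η ⊗ₜ[R] η')) =
      TensorProduct.map (sandwich R S η) (sandwich R S' η') := by
  induction η with
  | zero => simp
  | add x y hx hy => simp only [TensorProduct.add_tmul, map_add, TensorProduct.map_add_left, hx, hy]
  | tmul x y =>
    induction η' with
    | zero => simp
    | add x y hx hy =>
      simp only [TensorProduct.tmul_add, map_add, TensorProduct.map_add_right, hx, hy]
    | tmul x' y' => ext s s'; simp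

end Sandwich

section Center

variable {R : Type*} [CommSemiring R] {S S' : Type*} [Semiring S] [Semiring S']
  [Algebra R S] [Algebra R S']

lemma tmul_mem_center {s : S} {s' : S'} (hs : s ∈ Subalgebra.center R S)
    (hs' : s' ∈ Subalgebra.center R S') : s ⊗ₜ[R] s' ∈ Subalgebra.center R (S ⊗[R] S') := by
  rw [Subalgebra.mem_center_iff] at *
  intro x
  induction x with
  | zero => simp
  | add x y hx hy => rw [add_mul, mul_add, hx, hy]
  | tmul t t' => simp only [Algebra.TensorProduct.tmul_mul_tmul, hs, hs']

lemma range_map_center_le_center :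
    (Algebra.TensorProduct.map (Subalgebra.center R S).val (Subalgebra.center R S').val).range ≤
      Subalgebra.center R (S ⊗[R] S') := by
  rintro _ ⟨x, rfl⟩
  induction x with
  | zero => exact zero_mem _
  | add x y hx hy => rw [map_add]; exact add_mem hx hy
  | tmul s s' => exact tmul_mem_center s.2 s'.2

lemma map_mem_range_map_val {A : Subalgebra R S} {A' : Subalgebra R S'} {f : S →ₗ[R] S}
    {f' : S' →ₗ[R] S'} (hf : ∀ s, f s ∈ A) (hf' : ∀ s', f' s' ∈ A') (z : S ⊗[R] S') :
    TensorProduct.map f f' z ∈ (Algebra.TensorProduct.map A.val A'.val).range := by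
  induction z with
  | zero => exact map_zero (TensorProduct.map f f') ▸ zero_mem _
  | add x y hx hy => exact map_add (TensorProduct.map f f') x y ▸ add_mem hx hy
  | tmul s s' => exact ⟨⟨f s, hf s⟩ ⊗ₜ ⟨f' s', hf' s'⟩, rfl⟩

end Center

section CentralSeparable

variable {R : Type*} [CommRing R] {S S' : Type*} [Ring S] [Ring S'] [Algebra R S] [Algebra R S']

lemma range_algebraMap_eq_center_iff :
    (algebraMap R S).range = Subring.center S ↔ Subalgebra.center R S = ⊥ := by
  rw [← Subalgebra.toSubring_injective.eq_iff, Subalgebra.center_toSubring, eq_comm]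
  rfl

lemma algebraMap_injective_of_faithfullyFlat [Module.FaithfullyFlat R S] :
    Function.Injective (algebraMap R S) := by
  refine (injective_iff_map_eq_zero _).2 fun r hr => ?_
  rw [← Module.FaithfullyFlat.one_tmul_eq_zero_iff R R (A := S)]
  calc (1 : S) ⊗ₜ[R] r = algebraMap R S r ⊗ₜ[R] 1 := by
        rw [Algebra.algebraMap_eq_smul_one, TensorProduct.smul_tmul, smul_eq_mul, mul_one]
    _ = 0 := by rw [hr, TensorProduct.zero_tmul]

lemma IsSeparableExtension.center_tensorProduct
    (h : IsSeparableExtension R S) (h' : IsSeparableExtension R S') :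
    Subalgebra.center R (S ⊗[R] S') = (Algebra.TensorProduct.map
      (Subalgebra.center R S).val (Subalgebra.center R S').val).range := by
  obtain ⟨η, hη, hη_one⟩ := h
  obtain ⟨η', hη', hη'_one⟩ := h'
  refine le_antisymm (fun z hz => ?_) range_map_center_le_center
  have hmul : LinearMap.mul' R (S ⊗[R] S')
      (TensorProduct.tensorTensorTensorComm R S S S' S' (η ⊗ₜ[R] η')) = 1 := by
    rw [← LinearEquiv.coe_coe, ← LinearMap.comp_apply,
      TensorProduct.Algebra.mul'_comp_tensorTensorTensorComm, TensorProduct.map_tmul, hη_one,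
      hη'_one, Algebra.TensorProduct.one_def]
  have hz_eq : TensorProduct.map (sandwich R S η) (sandwich R S' η') z = z := by
    rw [← sandwich_tensorTensorTensorComm, sandwich_apply_of_mem_center hz, hmul, mul_one]
  rw [← hz_eq]
  exact map_mem_range_map_val (sandwich_apply_mem_center hη) (sandwich_apply_mem_center hη') z

lemma IsSeparableExtension.center_tensorProduct_eq_bot
    (h : IsSeparableExtension R S) (h' : IsSeparableExtension R S')
    (hS : Subalgebra.center R S = ⊥) (hS' : Subalgebra.center R S' = ⊥) :
    Subalgebra.center R (S ⊗[R] S') = ⊥ := by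
  rw [h.center_tensorProduct h', hS, hS', Algebra.TensorProduct.map_range, AlgHom.range_comp,
    AlgHom.range_comp, Subalgebra.range_val, Subalgebra.range_val, Algebra.map_bot, Algebra.map_bot,
    sup_idem]

end CentralSeparable

section GaloisExtension

variable {R : Type*} [CommRing R] {S S' : Type*} [Ring S] [Ring S'] [Algebra R S] [Algebra R S']
  {G G' : Type*} [Group G] [Group G'] [Finite G] [Finite G'] {act : G →* (S ≃ₐ[R] S)}
  {act' : G' →* (S' ≃ₐ[R] S')}

lemma IsCentralizingGaloisExtension.tensorProduct (h : IsCentralizingGaloisExtension G R S act)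
    (h' : IsCentralizingGaloisExtension G' R S' act')
    {act'' : (G × G') →* ((S ⊗[R] S') ≃ₐ[R] (S ⊗[R] S'))}
    (hact'' : ∀ (g : G) (g' : G') (s : S) (s' : S'),
      act'' (g, g') (s ⊗ₜ[R] s') = (act g s) ⊗ₜ[R] (act' g' s')) :
    IsCentralizingGaloisExtension (G × G') R (S ⊗[R] S') act'' := by
  classical
  have := Fintype.ofFinite G
  have := Fintype.ofFinite G'
  have := h.faithfullyFlat
  have := h'.faithfullyFlat
  refine ⟨faithfullyFlat_tensorProduct, ?_⟩
  rw [gammaAlg_tensorProduct act act' act'' hact'']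
  exact (piTensorPi R S S' G G').bijective.comp
    ((TensorProduct.map_bijective h.bijective h'.bijective).comp
      (TensorProduct.tensorTensorTensorComm R S S' S S').bijective)

end GaloisExtension

theorem tensorProduct_isGalois_general
    {R : Type*} [CommRing R] {S S' : Type*} [Ring S] [Ring S']
    [Algebra R S] [Algebra R S']
    {G G' : Type*} [Group G] [Group G'] [Finite G] [Finite G']
    (act : G →* (S ≃ₐ[R] S)) (act' : G' →* (S' ≃ₐ[R] S'))
    (hGal : IsCentralizingGaloisExtension G R S act)
    (hGal' : IsCentralizingGaloisExtension G' R S' act')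
    (act'' : (G × G') →* ((S ⊗[R] S') ≃ₐ[R] (S ⊗[R] S')))
    (hact'' : ∀ (g : G) (g' : G') (s : S) (s' : S'),
      act'' (g, g') (s ⊗ₜ[R] s') = (act g s) ⊗ₜ[R] (act' g' s')) :
    IsCentralizingGaloisExtension (G × G') R (S ⊗[R] S') act'' ∧
    (IsCentralExtension R S → IsCentralExtension R S' →
      IsGaloisAzumayaExtension (G × G') R (S ⊗[R] S') act'') := by
  have hGal'' := hGal.tensorProduct hGal' hact''
  have := hGal''.faithfullyFlat
  have hSep := isSeparableExtension_of_gammaAlg_bijective hGal.bijective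
  have hSep' := isSeparableExtension_of_gammaAlg_bijective hGal'.bijective
  have hSep'' := isSeparableExtension_of_gammaAlg_bijective hGal''.bijective
  refine ⟨hGal'', fun hS hS' => ⟨hGal'', ⟨algebraMap_injective_of_faithfullyFlat, ?_⟩, hSep''⟩⟩
  rw [range_algebraMap_eq_center_iff]
  exact hSep.center_tensorProduct_eq_bot hSep'
    (range_algebraMap_eq_center_iff.1 hS.2) (range_algebraMap_eq_center_iff.1 hS'.2)

/-- Let `R` be a commutative ring, `ψ : R → S` a centralizing `G`-Galois
extension and `ψ' : R → S'` a centralizing `G'`-Galois extension.  With the multiplication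
`(s ⊗ s')(t ⊗ t') = st ⊗ s't'` and the action `(g,g')⬝(s ⊗ s') = g(s) ⊗ g'(s')` of
`G × G'`, the canonical extension `ψ'' : R → S ⊗_R S'` is a centralizing
`(G × G')`-Galois extension.  If moreover `ψ` and `ψ'` are central (i.e. Galois-Azumaya),
then `ψ''` is a central `(G × G')`-Galois extension, i.e. a `(G × G')`-Galois-Azumaya
extension. -/
theorem tensorProduct_isGalois
    {R : Type*} [CommRing R] {S S' : Type*} [Ring S] [Ring S']
    [Algebra R S] [Algebra R S']
    {G G' : Type*} [Group G] [Group G'] [Finite G] [Finite G']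
    (act : G →* (S ≃ₐ[R] S)) (act' : G' →* (S' ≃ₐ[R] S'))
    (hGal : IsCentralizingGaloisExtension G R S act)
    (hGal' : IsCentralizingGaloisExtension G' R S' act')
    (act'' : (G × G') →* ((S ⊗[R] S') ≃ₐ[R] (S ⊗[R] S')))
    (hact'' : ∀ (g : G) (g' : G') (s : S) (s' : S'),
      act'' (g, g') (s ⊗ₜ[R] s') = (act g s) ⊗ₜ[R] (act' g' s')) :
    IsCentralizingGaloisExtension (G × G') R (S ⊗[R] S') act'' ∧
    (IsGaloisAzumayaExtension G R S act → IsGaloisAzumayaExtension G' R S' act' →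
      IsGaloisAzumayaExtension (G × G') R (S ⊗[R] S') act'') := by
  obtain ⟨hGal'', hAz⟩ := tensorProduct_isGalois_general act act' hGal hGal' act'' hact''
  exact ⟨hGal'', fun hAzS hAzS' => hAz hAzS.2.1 hAzS'.2.1⟩

end
end Nuss
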